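/- arXiv:2006.15076 — 7 statements merged into one kernel-verified Lean document; each statement's English description precedes it below -/
import Mathlib

section
/- Let X be a nonempty set and G : X × X × X → ℝ a G-metric on X. Then the function d_G defined by d_G(x,y) = G(x,y,y) + G(y,x,x) is a metric on X (it is nonnegative, vanishes exactly on the diagonal, is symmetric, and satisfies the triangle inequality). -/
open Filter Set

/-- A G-metric on a set `X`. -/
structure IsGMetric {X : Type*} (G : X → X → X → ℝ) : Prop where
  eq_iff : ∀ x y z, G x y z = 0 ↔ x = y ∧ y = z
  pos : ∀ x y, x ≠ y → 0 < G x x y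
  mono : ∀ x y z, z ≠ y → G x x y ≤ G x y z
  symm_swap : ∀ x y z, G x y z = G x z y
  symm_cycle : ∀ x y z, G x y z = G y z x
  rect : ∀ x y z a, G x y z ≤ G x a a + G a y z

/-- `D(x,y) = G(x,y,y) + G(y,x,x)`. -/
def gD {X : Type*} (G : X → X → X → ℝ) (x y : X) : ℝ :=
  G x y y + G y x x

/-- `T` is a cyclical operator with respect to the family of sets `A`. -/
def IsCyclical {X : Type*} {m : ℕ} [NeZero m] (A : Fin m → Set X) (T : X → X) : Prop :=
  ∀ i : Fin m, Set.MapsTo T (A i) (A (i + 1))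

/-!
Setting `y = z` in the rectangle inequality `G x y z ≤ G x a a + G a y z` shows that
`q x y = G x y y` satisfies the triangle inequality, so `q` is a metric except possibly for
symmetry. The function `d_G x y = q x y + q y x` is its symmetrization.
-/

/-- A quasi-metric: a function satisfying the axioms of a metric except symmetry. It isolates what
the restriction `fun x y ↦ G x y y` of a G-metric contributes to `gD G`. -/
structure IsQuasiMetric {X : Type*} (q : X → X → ℝ) : Prop where
  nonneg : ∀ x y, 0 ≤ q x y
  eq_zero_iff : ∀ x y, q x y = 0 ↔ x = y
  triangle : ∀ x y z, q x z ≤ q x y + q y z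

/-- The symmetrization of a two-variable function, taken as a sum rather than a mean or a maximum
so that `gD G` is by definition the symmetrization of `fun x y ↦ G x y y`. -/
def symmetrization {X : Type*} (q : X → X → ℝ) (x y : X) : ℝ :=
  q x y + q y x

theorem symmetrization_comm {X : Type*} (q : X → X → ℝ) (x y : X) :
    symmetrization q x y = symmetrization q y x :=
  add_comm _ _

namespace IsQuasiMetric

variable {X : Type*} {q : X → X → ℝ}

theorem symmetrization_nonneg (hq : IsQuasiMetric q) (x y : X) : 0 ≤ symmetrization q x y :=
  add_nonneg (hq.nonneg x y) (hq.nonneg y x)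

theorem symmetrization_eq_zero_iff (hq : IsQuasiMetric q) (x y : X) :
    symmetrization q x y = 0 ↔ x = y := by
  rw [symmetrization, add_eq_zero_iff_of_nonneg (hq.nonneg x y) (hq.nonneg y x),
    hq.eq_zero_iff, hq.eq_zero_iff, eq_comm (a := y), and_self]

theorem symmetrization_triangle (hq : IsQuasiMetric q) (x y z : X) :
    symmetrization q x z ≤ symmetrization q x y + symmetrization q y z :=
  calc
    q x z + q z x ≤ (q x y + q y z) + (q z y + q y x) :=
      add_le_add (hq.triangle x y z) (hq.triangle z y x)
    _ = (q x y + q y x) + (q y z + q z y) := by ring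

end IsQuasiMetric

namespace IsGMetric

variable {X : Type*} {G : X → X → X → ℝ}

theorem apply_right_eq_zero_iff (hG : IsGMetric G) (x y : X) : G x y y = 0 ↔ x = y := by
  simp only [hG.eq_iff, and_true]

theorem apply_right_nonneg (hG : IsGMetric G) (x y : X) : 0 ≤ G x y y := by
  obtain rfl | hxy := eq_or_ne x y
  · exact ((hG.apply_right_eq_zero_iff x x).2 rfl).ge
  · rw [hG.symm_cycle]
    exact (hG.pos y x hxy.symm).le

theorem isQuasiMetric (hG : IsGMetric G) : IsQuasiMetric fun x y ↦ G x y y where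
  nonneg := hG.apply_right_nonneg
  eq_zero_iff := hG.apply_right_eq_zero_iff
  triangle x y z := hG.rect x z z y

end IsGMetric

theorem stmt_0_general {X : Type*} (G : X → X → X → ℝ)
    (hG : IsQuasiMetric fun x y ↦ G x y y) :
    (∀ x y : X, 0 ≤ gD G x y) ∧
    (∀ x y : X, gD G x y = 0 ↔ x = y) ∧
    (∀ x y : X, gD G x y = gD G y x) ∧
    (∀ x y z : X, gD G x z ≤ gD G x y + gD G y z) :=
  ⟨hG.symmetrization_nonneg, hG.symmetrization_eq_zero_iff, symmetrization_comm _,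
    hG.symmetrization_triangle⟩

/-- The function `d_G(x,y) = G(x,y,y) + G(y,x,x)` associated to a G-metric is a metric:
it is nonnegative, vanishes exactly on the diagonal, is symmetric, and satisfies
the triangle inequality. -/
theorem stmt_0 {X : Type*} [Nonempty X] (G : X → X → X → ℝ) (hG : IsGMetric G) :
    (∀ x y : X, 0 ≤ gD G x y) ∧
    (∀ x y : X, gD G x y = 0 ↔ x = y) ∧
    (∀ x y : X, gD G x y = gD G y x) ∧
    (∀ x y z : X, gD G x z ≤ gD G x y + gD G y z) :=
  stmt_0_general G hG.isQuasiMetric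
end

section
/- Let G be a G-metric on a nonempty set X, let X_1,…,X_m be nonempty subsets of X, let T : ∪_{i=1}^m X_i → ∪_{i=1}^m X_i be a cyclical operator, and let ε > 0. Write D(x,y) = G(x,y,y) + G(y,x,x). Assume: (a) F_ε^G(T) ≠ ∅; (b) there is a function ψ : (0,∞) → (0,∞) such that for every ξ > 0 and all x, y ∈ F_ε^G(T), D(x,y) − D(Tx,Ty) < ξ implies D(x,y) ≤ ψ(ξ). Then D(x,y) ≤ ψ(2ε) for all x, y ∈ F_ε^G(T). -/
open Filter Set

theorem gD_comm {X : Type*} (G : X → X → X → ℝ) (x y : X) : gD G x y = gD G y x :=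
  add_comm _ _

namespace IsGMetric

variable {X : Type*} {G : X → X → X → ℝ}

theorem gD_triangle (hG : IsGMetric G) (x y z : X) : gD G x z ≤ gD G x y + gD G y z := by
  have forward : G x z z ≤ G x y y + G y z z := hG.rect x z z y
  have backward : G z x x ≤ G z y y + G y x x := hG.rect z x x y
  unfold gD
  linarith

theorem gD_sub_gD_le (hG : IsGMetric G) (x y x' y' : X) :
    gD G x y - gD G x' y' ≤ gD G x x' + gD G y y' := by
  rw [sub_le_iff_le_add]
  calc
    gD G x y ≤ gD G x x' + gD G x' y := hG.gD_triangle x x' y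
    _ ≤ gD G x x' + (gD G x' y' + gD G y' y) := by gcongr; exact hG.gD_triangle x' y' y
    _ = gD G x x' + gD G y y' + gD G x' y' := by rw [gD_comm G y' y]; ring

end IsGMetric

theorem stmt_3_general {X : Type*} {G : X → X → X → ℝ} (hG : IsGMetric G)
    (S : Set X) (T : X → X) (ε C : ℝ)
    (hC : ∀ x ∈ {x ∈ S | gD G x (T x) < ε}, ∀ y ∈ {x ∈ S | gD G x (T x) < ε},
      gD G x y - gD G (T x) (T y) < 2 * ε → gD G x y ≤ C) :
    ∀ x ∈ {x ∈ S | gD G x (T x) < ε}, ∀ y ∈ {x ∈ S | gD G x (T x) < ε}, gD G x y ≤ C := by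
  intro x hx y hy
  refine hC x hx y hy ?_
  calc
    gD G x y - gD G (T x) (T y) ≤ gD G x (T x) + gD G y (T y) :=
      hG.gD_sub_gD_le x y (T x) (T y)
    _ < ε + ε := add_lt_add hx.2 hy.2
    _ = 2 * ε := (two_mul ε).symm

/-- Quantitative lemma: if the set of `ε`-fixed points of a cyclical operator `T` is
nonempty and satisfies the `ψ`-condition, then `D(x,y) ≤ ψ(2ε)` for all `ε`-fixed
points `x, y`. -/
theorem stmt_3 {X : Type*} [Nonempty X] {m : ℕ} [NeZero m]
    (G : X → X → X → ℝ) (hG : IsGMetric G)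
    (A : Fin m → Set X) (hA : ∀ i, (A i).Nonempty)
    (T : X → X) (hT : IsCyclical A T)
    (ε : ℝ) (hε : 0 < ε)
    (hne : {x ∈ ⋃ i, A i | gD G x (T x) < ε}.Nonempty)
    (ψ : ℝ → ℝ) (hψpos : ∀ ξ > 0, 0 < ψ ξ)
    (hψ : ∀ ξ > 0, ∀ x ∈ {x ∈ ⋃ i, A i | gD G x (T x) < ε},
      ∀ y ∈ {x ∈ ⋃ i, A i | gD G x (T x) < ε},
      gD G x y - gD G (T x) (T y) < ξ → gD G x y ≤ ψ ξ) :
    ∀ x ∈ {x ∈ ⋃ i, A i | gD G x (T x) < ε},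
      ∀ y ∈ {x ∈ ⋃ i, A i | gD G x (T x) < ε},
      gD G x y ≤ ψ (2 * ε) :=
  stmt_3_general hG (⋃ i, A i) T ε (ψ (2 * ε)) (hψ (2 * ε) (by positivity))
end

section
/- Let G be a G-metric on a nonempty set X, let X_1,…,X_m be nonempty subsets of X, and let T : ∪_{i=1}^m X_i → ∪_{i=1}^m X_i be a cyclical operator. Write D(x,y) = G(x,y,y) + G(y,x,x). Suppose there exists α ∈ (0,1) such that D(Tx,Ty) ≤ α·D(x,y) for all x ∈ X_i and y ∈ X_{i+1} (indices mod m), i.e. T is a G-α-cyclical contraction. Then for every ε > 0 the set F_ε^G(T) of ε-fixed points of T is nonempty. -/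
open Filter Set

section GeometricDecay

variable {X : Type*} {T : X → X} {S : Set X} {φ : X → ℝ} {α : ℝ}

theorem apply_iterate_le_pow_mul (hα : 0 ≤ α) (hT : MapsTo T S S)
    (hφ : ∀ x ∈ S, φ (T x) ≤ α * φ x) {x : X} (hx : x ∈ S) (n : ℕ) :
    φ (T^[n] x) ≤ α ^ n * φ x :=
  le_geom (u := fun k ↦ φ (T^[k] x)) hα n fun k _ ↦ by
    simpa only [Function.iterate_succ_apply'] using hφ _ (hT.iterate k hx)

theorem exists_mem_lt_of_apply_le_mul (hα : α ∈ Ico (0 : ℝ) 1) (hT : MapsTo T S S)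
    (hS : S.Nonempty) (hφ : ∀ x ∈ S, φ (T x) ≤ α * φ x) {ε : ℝ} (hε : 0 < ε) :
    ∃ x ∈ S, φ x < ε := by
  obtain ⟨x, hx⟩ := hS
  have tendsto_bound : Tendsto (fun n : ℕ ↦ α ^ n * φ x) atTop (nhds 0) := by
    simpa only [zero_mul] using
      (tendsto_pow_atTop_nhds_zero_of_lt_one hα.1 hα.2).mul_const (φ x)
  obtain ⟨n, hn⟩ := (tendsto_bound.eventually_lt_const hε).exists
  exact ⟨T^[n] x, hT.iterate n hx, (apply_iterate_le_pow_mul hα.1 hT hφ hx n).trans_lt hn⟩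

end GeometricDecay

theorem mapsTo_iUnion_self_of_mapsTo_apply {X ι : Type*} {A : ι → Set X} {σ : ι → ι} {T : X → X}
    (hT : ∀ i, MapsTo T (A i) (A (σ i))) : MapsTo T (⋃ i, A i) (⋃ i, A i) :=
  mapsTo_iUnion.2 fun i ↦ (hT i).mono_right (subset_iUnion A (σ i))

-- As `x` and `T x` lie in consecutive sets, each step of an orbit shrinks `D x (T x)` by `α`.
theorem stmt_4_general {X ι : Type*} (D : X → X → ℝ) (σ : ι → ι)
    (A : ι → Set X) (hA : (⋃ i, A i).Nonempty)
    (T : X → X) (hT : ∀ i, MapsTo T (A i) (A (σ i)))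
    (α : ℝ) (hα : α ∈ Ico (0 : ℝ) 1)
    (hcontr : ∀ i, ∀ x ∈ A i, ∀ y ∈ A (σ i), D (T x) (T y) ≤ α * D x y) :
    ∀ ε > 0, {x ∈ ⋃ i, A i | D x (T x) < ε}.Nonempty := by
  intro ε hε
  have displacement_le : ∀ x ∈ ⋃ i, A i, D (T x) (T (T x)) ≤ α * D x (T x) := by
    intro x hx
    obtain ⟨i, hxi⟩ := mem_iUnion.1 hx
    exact hcontr i x hxi (T x) (hT i hxi)
  exact exists_mem_lt_of_apply_le_mul (φ := fun x ↦ D x (T x)) hα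
    (mapsTo_iUnion_self_of_mapsTo_apply hT) hA displacement_le hε

/-- A G-α-cyclical contraction has, for every `ε > 0`, a nonempty set of
`ε`-fixed points. -/
theorem stmt_4 {X : Type*} [Nonempty X] {m : ℕ} [NeZero m]
    (G : X → X → X → ℝ) (hG : IsGMetric G)
    (A : Fin m → Set X) (hA : ∀ i, (A i).Nonempty)
    (T : X → X) (hT : IsCyclical A T)
    (α : ℝ) (hα : α ∈ Set.Ioo (0 : ℝ) 1)
    (hcontr : ∀ i : Fin m, ∀ x ∈ A i, ∀ y ∈ A (i + 1),
      gD G (T x) (T y) ≤ α * gD G x y) :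
    ∀ ε > 0, {x ∈ ⋃ i, A i | gD G x (T x) < ε}.Nonempty :=
  stmt_4_general (gD G) (· + 1) A (nonempty_iUnion.2 ⟨0, hA 0⟩) T hT α
    (Ioo_subset_Ico_self hα) hcontr
end

section
/- Let G be a G-metric on a nonempty set X, let X_1,…,X_m be nonempty subsets of X, and let T : ∪_{i=1}^m X_i → ∪_{i=1}^m X_i be a cyclical operator. Write D(x,y) = G(x,y,y) + G(y,x,x). Suppose T is a G-Chatterjea cyclical operator, i.e. there exists α ∈ (0,1/2) such that D(Tx,Ty) ≤ α·(D(x,Ty) + D(y,Tx)) for all x ∈ X_i and y ∈ X_{i+1} (indices mod m). Then for every ε > 0 the set F_ε^G(T) of ε-fixed points of T is nonempty. -/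
open Filter Set

/-!
Taking `y = T x` in the Chatterjea inequality kills one term and leaves
`D (T x) (T² x) ≤ α * D x (T² x)`. By the triangle inequality the displacement `D x (T x)` then
shrinks by the factor `α / (1 - α) < 1` at each application of `T`, so it gets below any `ε`
along an orbit.
-/

theorem IsGMetric.gD_self {X : Type*} {G : X → X → X → ℝ} (hG : IsGMetric G) (x : X) :
    gD G x x = 0 := by
  have hGx : G x x x = 0 := (hG.eq_iff x x x).2 ⟨rfl, rfl⟩
  rw [gD, hGx, add_zero]

theorem IsGMetric.gD_triangle_s5 {X : Type*} {G : X → X → X → ℝ} (hG : IsGMetric G) (x y z : X) :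
    gD G x z ≤ gD G x y + gD G y z := by
  have hxz : G x z z ≤ G x y y + G y z z := hG.rect x z z y
  have hzx : G z x x ≤ G z y y + G y x x := hG.rect z x x y
  unfold gD
  linarith

theorem IsCyclical.mapsTo_iUnion {X : Type*} {m : ℕ} [NeZero m] {A : Fin m → Set X} {T : X → X}
    (hT : IsCyclical A T) : MapsTo T (⋃ i, A i) (⋃ i, A i) :=
  Set.mapsTo_iUnion.2 fun i _ hx => mem_iUnion_of_mem (i + 1) (hT i hx)

theorem le_div_one_sub_mul_of_le_mul_add {α a b : ℝ} (hα : α < 1) (h : a ≤ α * (b + a)) :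
    a ≤ α / (1 - α) * b := by
  rw [div_mul_eq_mul_div, le_div_iff₀ (sub_pos.2 hα)]
  linarith

theorem exists_mem_lt_of_map_le_mul {X : Type*} {S : Set X} {T : X → X} {f : X → ℝ} {k ε : ℝ}
    (hS : S.Nonempty) (hT : MapsTo T S S) (hk₀ : 0 ≤ k) (hk₁ : k < 1)
    (hf : ∀ x ∈ S, f (T x) ≤ k * f x) (hε : 0 < ε) : ∃ x ∈ S, f x < ε := by
  obtain ⟨x, hx⟩ := hS
  have hmem (n : ℕ) : T^[n] x ∈ S := hT.iterate n hx
  have hgeom (n : ℕ) : f (T^[n] x) ≤ k ^ n * f x :=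
    le_geom (u := fun n => f (T^[n] x)) hk₀ n fun j _ => by
      simpa only [Function.iterate_succ_apply'] using hf _ (hmem j)
  have hlim : Tendsto (fun n : ℕ => k ^ n * f x) atTop (nhds 0) := by
    simpa only [zero_mul] using (tendsto_pow_atTop_nhds_zero_of_lt_one hk₀ hk₁).mul_const (f x)
  obtain ⟨n, hn⟩ := (hlim.eventually_lt_const hε).exists
  exact ⟨T^[n] x, hmem n, (hgeom n).trans_lt hn⟩

theorem stmt_5_general {X : Type*} {d : X → X → ℝ} (hd : ∀ x y z, d x z ≤ d x y + d y z)
    {S : Set X} (hS : S.Nonempty) {T : X → X} (hT : MapsTo T S S)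
    {α : ℝ} (hα : α ∈ Ico (0 : ℝ) (1 / 2))
    (hcontr : ∀ x ∈ S, d (T x) (T (T x)) ≤ α * d x (T (T x))) {ε : ℝ} (hε : 0 < ε) :
    {x ∈ S | d x (T x) < ε}.Nonempty := by
  obtain ⟨hα₀, hα_half⟩ := hα
  have hα₁ : α < 1 := by linarith
  have hk₀ : 0 ≤ α / (1 - α) := div_nonneg hα₀ (sub_nonneg.2 hα₁.le)
  have hk₁ : α / (1 - α) < 1 := by
    rw [div_lt_one (sub_pos.2 hα₁)]
    linarith
  refine exists_mem_lt_of_map_le_mul hS hT hk₀ hk₁ (fun x hx => ?_) hε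
  apply le_div_one_sub_mul_of_le_mul_add hα₁
  calc d (T x) (T (T x)) ≤ α * d x (T (T x)) := hcontr x hx
    _ ≤ α * (d x (T x) + d (T x) (T (T x))) := by gcongr; exact hd x (T x) (T (T x))

/-- A G-Chatterjea cyclical operator has, for every `ε > 0`, a nonempty set of
`ε`-fixed points. -/
theorem stmt_5 {X : Type*} [Nonempty X] {m : ℕ} [NeZero m]
    (G : X → X → X → ℝ) (hG : IsGMetric G)
    (A : Fin m → Set X) (hA : ∀ i, (A i).Nonempty)
    (T : X → X) (hT : IsCyclical A T)
    (α : ℝ) (hα : α ∈ Set.Ioo (0 : ℝ) (1/2))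
    (hcontr : ∀ i : Fin m, ∀ x ∈ A i, ∀ y ∈ A (i + 1),
      gD G (T x) (T y) ≤ α * (gD G x (T y) + gD G y (T x))) :
    ∀ ε > 0, {x ∈ ⋃ i, A i | gD G x (T x) < ε}.Nonempty := by
  refine fun ε hε => stmt_5_general hG.gD_triangle_s5 (nonempty_iUnion.2 ⟨0, hA 0⟩)
    hT.mapsTo_iUnion (Ioo_subset_Ico_self hα) (fun x hx => ?_) hε
  obtain ⟨i, hxi⟩ := mem_iUnion.1 hx
  simpa only [hG.gD_self, add_zero] using hcontr i x hxi (T x) (hT i hxi)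
end

section
/- Let G be a G-metric on a nonempty set X, let X_1,…,X_m be nonempty subsets of X, and let T : ∪_{i=1}^m X_i → ∪_{i=1}^m X_i be a cyclical operator. Write D(x,y) = G(x,y,y) + G(y,x,x). Suppose T is a G-Mohseni-semi cyclical operator, i.e. there exists α ∈ (0,1/2) such that D(Tx,Ty) ≤ α·(D(x,y) + D(x,Tx)) for all x ∈ X_i and y ∈ X_{i+1} (indices mod m). Then for every ε > 0 the set F_ε^G(T) of ε-fixed points of T is nonempty. -/
open Filter Set

/-! Along an orbit of `T` inside the union, taking `y = T x` in the contraction condition gives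
`D(Tx, T²x) ≤ 2α D(x, Tx)` with `2α < 1`. While `D(x, Tx)` stays at least `ε`, each step therefore
lowers it by at least `(1 - 2α) ε`, which cannot go on forever. -/

section OrderedRing

variable {K : Type*} [CommRing K] [LinearOrder K] [IsStrictOrderedRing K] [Archimedean K]

theorem exists_lt_of_forall_succ_le_mul {u : ℕ → K} {c ε : K} (hc : c < 1) (hε : 0 < ε)
    (hu : ∀ n, u (n + 1) ≤ c * u n) : ∃ n, u n < ε := by
  by_contra! hge
  have hdrop_pos : 0 < (1 - c) * ε := mul_pos (sub_pos.2 hc) hε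
  have hstep (n : ℕ) : u (n + 1) + (1 - c) * ε ≤ u n :=
    calc u (n + 1) + (1 - c) * ε ≤ c * u n + (1 - c) * u n :=
          add_le_add (hu n) (mul_le_mul_of_nonneg_left (hge n) (sub_pos.2 hc).le)
      _ = u n := by ring
  have hlinear (n : ℕ) : u n + n • ((1 - c) * ε) ≤ u 0 := by
    induction n with
    | zero => simp
    | succ n ih =>
      rw [succ_nsmul]
      linarith [hstep n]
  obtain ⟨n, hn⟩ := Archimedean.arch (u 0) hdrop_pos
  linarith [hge n, hlinear n]

theorem exists_mem_lt_of_mapsTo_of_le_mul {X : Type*} {T : X → X} {S : Set X} {f : X → K}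
    {c ε : K} (hne : S.Nonempty) (hT : Set.MapsTo T S S) (hc : c < 1) (hε : 0 < ε)
    (hf : ∀ x ∈ S, f (T x) ≤ c * f x) : ∃ x ∈ S, f x < ε := by
  obtain ⟨x₀, hx₀⟩ := hne
  have horbit (n : ℕ) : T^[n] x₀ ∈ S := hT.iterate n hx₀
  obtain ⟨n, hn⟩ := exists_lt_of_forall_succ_le_mul (u := fun n ↦ f (T^[n] x₀)) hc hε fun n ↦ by
    simpa only [Function.iterate_succ_apply'] using hf _ (horbit n)
  exact ⟨T^[n] x₀, horbit n, hn⟩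

end OrderedRing

theorem stmt_8_general {X ι : Type*} {A : ι → Set X} {σ : ι → ι} {T : X → X}
    (hA : (⋃ i, A i).Nonempty) (hT : ∀ i, Set.MapsTo T (A i) (A (σ i)))
    {D : X → X → ℝ} {α : ℝ} (hα : α < 1 / 2)
    (hcontr : ∀ i, ∀ x ∈ A i, ∀ y ∈ A (σ i), D (T x) (T y) ≤ α * (D x y + D x (T x))) :
    ∀ ε > 0, {x ∈ ⋃ i, A i | D x (T x) < ε}.Nonempty := by
  intro ε hε
  have hinvariant : Set.MapsTo T (⋃ i, A i) (⋃ i, A i) :=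
    Set.mapsTo_iUnion.2 fun i ↦ (hT i).mono_right (Set.subset_iUnion A (σ i))
  have hdisplacement : ∀ x ∈ ⋃ i, A i, D (T x) (T (T x)) ≤ 2 * α * D x (T x) := by
    intro x hx
    obtain ⟨i, hxi⟩ := Set.mem_iUnion.1 hx
    linarith [hcontr i x hxi (T x) (hT i hxi)]
  exact exists_mem_lt_of_mapsTo_of_le_mul (f := fun x ↦ D x (T x)) hA hinvariant
    (by linarith) hε hdisplacement

/-- A G-Mohseni-semi cyclical operator has, for every `ε > 0`, a nonempty set of
`ε`-fixed points. -/
theorem stmt_8 {X : Type*} [Nonempty X] {m : ℕ} [NeZero m]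
    (G : X → X → X → ℝ) (hG : IsGMetric G)
    (A : Fin m → Set X) (hA : ∀ i, (A i).Nonempty)
    (T : X → X) (hT : IsCyclical A T)
    (α : ℝ) (hα : α ∈ Set.Ioo (0 : ℝ) (1/2))
    (hcontr : ∀ i : Fin m, ∀ x ∈ A i, ∀ y ∈ A (i + 1),
      gD G (T x) (T y) ≤ α * (gD G x y + gD G x (T x))) :
    ∀ ε > 0, {x ∈ ⋃ i, A i | gD G x (T x) < ε}.Nonempty := by
  exact stmt_8_general (Set.nonempty_iUnion.2 ⟨0, hA 0⟩) hT hα.2 hcontr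
end

section
/- Let G be a G-metric on a nonempty set X, let X_1,…,X_m be nonempty subsets of X, and let T : ∪_{i=1}^m X_i → ∪_{i=1}^m X_i be a cyclical operator. Write D(x,y) = G(x,y,y) + G(y,x,x). Suppose T is a G-Mohseni cyclical operator, i.e. there exists α ∈ (0,1/2) such that D(Tx,Ty) ≤ α·(D(x,y) + D(Tx,Ty)) for all x ∈ X_i and y ∈ X_{i+1} (indices mod m). Then for every ε > 0 and all x, y ∈ F_ε^G(T), one has D(x,y) ≤ 2ε(1+α)/(1−2α). -/
open Filter Set

/-!
`D` is a pseudometric for which `T` contracts adjacent sets by the factor `k = α / (1 - α) < 1`.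
If `x` and `y` lie in adjacent sets, the path `x, T x, T y, y` gives
`(1 - k) D(x, y) ≤ D(x, T x) + D(y, T y)`. This estimate for the pair `(T x, y)` implies it for
`(x, y)`, by the triangle inequality through `T x` and `D(T x, T (T x)) ≤ k D(x, T x)`. Going
backwards round the cycle, it therefore holds for `x` in any of the sets.
-/

open Fin.CommRing in
theorem fin_cyclic_decreasing_induction {m : ℕ} [NeZero m] {P : Fin m → Prop} {j : Fin m}
    (base : P j) (step : ∀ i, P (i + 1) → P i) (i : Fin m) : P i := by
  have back : ∀ n : ℕ, P (j - n) := by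
    intro n
    induction n with
    | zero => simpa using base
    | succ n ih =>
      refine step _ ?_
      have shift : j - ((n + 1 : ℕ) : Fin m) + 1 = j - n := by push_cast; ring
      rwa [shift]
  simpa using back (j - i).val

section PseudoMetric

variable {X : Type*} [PseudoMetricSpace X] {m : ℕ} [NeZero m]
  {A : Fin m → Set X} {T : X → X} {i j : Fin m} {x y : X} {k α : ℝ}

/-- A cyclical operator `T` satisfying `dist (T x) (T y) ≤ k * dist x y` for `x` and `y` in
cyclically adjacent sets. The factor `k` is an arbitrary real number. -/
structure IsCyclicContraction (k : ℝ) (A : Fin m → Set X) (T : X → X) : Prop where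
  isCyclical : IsCyclical A T
  dist_map_le : ∀ i, ∀ x ∈ A i, ∀ y ∈ A (i + 1), dist (T x) (T y) ≤ k * dist x y

namespace IsCyclicContraction

theorem dist_map_map_le (h : IsCyclicContraction k A T) (hx : x ∈ A i) :
    dist (T x) (T (T x)) ≤ k * dist x (T x) :=
  h.dist_map_le i x hx (T x) (h.isCyclical i hx)

theorem one_sub_mul_dist_le_of_adjacent (h : IsCyclicContraction k A T)
    (hx : x ∈ A i) (hy : y ∈ A (i + 1)) :
    (1 - k) * dist x y ≤ dist x (T x) + dist y (T y) := by
  have path : dist x y ≤ dist x (T x) + dist (T x) (T y) + dist y (T y) := by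
    simpa only [dist_comm y] using dist_triangle4 x (T x) (T y) y
  linarith [h.dist_map_le i x hx y hy]

theorem one_sub_mul_dist_le_of_map (h : IsCyclicContraction k A T) (hk : k ≤ 1) (hx : x ∈ A i)
    (hTx : (1 - k) * dist (T x) y ≤ dist (T x) (T (T x)) + dist y (T y)) :
    (1 - k) * dist x y ≤ dist x (T x) + dist y (T y) :=
  calc (1 - k) * dist x y
      ≤ (1 - k) * (dist x (T x) + dist (T x) y) :=
        mul_le_mul_of_nonneg_left (dist_triangle _ _ _) (sub_nonneg.2 hk)
    _ = (1 - k) * dist x (T x) + (1 - k) * dist (T x) y := mul_add _ _ _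
    _ ≤ (1 - k) * dist x (T x) + (k * dist x (T x) + dist y (T y)) := by
        gcongr
        exact hTx.trans (by gcongr; exact h.dist_map_map_le hx)
    _ = dist x (T x) + dist y (T y) := by ring

theorem one_sub_mul_dist_le (h : IsCyclicContraction k A T) (hk : k ≤ 1)
    (hx : x ∈ A i) (hy : y ∈ A j) :
    (1 - k) * dist x y ≤ dist x (T x) + dist y (T y) := by
  suffices estimate : ∀ i, ∀ x ∈ A i, (1 - k) * dist x y ≤ dist x (T x) + dist y (T y) from
    estimate i x hx
  refine fin_cyclic_decreasing_induction (j := j - 1) ?_ ?_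
  · intro x hx
    exact h.one_sub_mul_dist_le_of_adjacent hx (by rwa [sub_add_cancel])
  · intro i estimate x hx
    exact h.one_sub_mul_dist_le_of_map hk hx (estimate (T x) (h.isCyclical i hx))

theorem dist_le (h : IsCyclicContraction k A T) (hk : k < 1) (hx : x ∈ A i) (hy : y ∈ A j) :
    dist x y ≤ (dist x (T x) + dist y (T y)) / (1 - k) :=
  (le_div_iff₀' (sub_pos.2 hk)).2 (h.one_sub_mul_dist_le hk.le hx hy)

end IsCyclicContraction

theorem IsCyclical.isCyclicContraction_of_mohseni (hT : IsCyclical A T) (hα : α < 1)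
    (hcontr : ∀ i, ∀ x ∈ A i, ∀ y ∈ A (i + 1),
      dist (T x) (T y) ≤ α * (dist x y + dist (T x) (T y))) :
    IsCyclicContraction (α / (1 - α)) A T where
  isCyclical := hT
  dist_map_le i x hx y hy := by
    rw [div_mul_eq_mul_div, le_div_iff₀ (sub_pos.2 hα)]
    linarith [hcontr i x hx y hy]

theorem stmt_9_general (hT : IsCyclical A T) (hα : α < 1 / 2)
    (hcontr : ∀ i, ∀ x ∈ A i, ∀ y ∈ A (i + 1),
      dist (T x) (T y) ≤ α * (dist x y + dist (T x) (T y)))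
    {ε : ℝ} (hx : x ∈ ⋃ i, A i) (hxε : dist x (T x) ≤ ε)
    (hy : y ∈ ⋃ i, A i) (hyε : dist y (T y) ≤ ε) :
    dist x y ≤ 2 * ε * (1 - α) / (1 - 2 * α) := by
  obtain ⟨i, hxi⟩ := mem_iUnion.1 hx
  obtain ⟨j, hyj⟩ := mem_iUnion.1 hy
  have one_sub_pos : 0 < 1 - α := by linarith
  have factor_lt_one : α / (1 - α) < 1 := (div_lt_one one_sub_pos).2 (by linarith)
  have one_sub_factor : 1 - α / (1 - α) = (1 - 2 * α) / (1 - α) := by field_simp; ring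
  have contraction := hT.isCyclicContraction_of_mohseni (by linarith) hcontr
  calc dist x y
      ≤ (dist x (T x) + dist y (T y)) / (1 - α / (1 - α)) :=
        contraction.dist_le factor_lt_one hxi hyj
    _ ≤ (2 * ε) / (1 - α / (1 - α)) :=
        div_le_div_of_nonneg_right (by linarith) (sub_pos.2 factor_lt_one).le
    _ = 2 * ε * (1 - α) / (1 - 2 * α) := by rw [one_sub_factor, div_div_eq_mul_div]

end PseudoMetric

namespace IsGMetric

variable {X : Type*} {G : X → X → X → ℝ}

theorem gD_self_s9 (hG : IsGMetric G) (x : X) : gD G x x = 0 := by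
  simp only [gD, (hG.eq_iff x x x).2 ⟨rfl, rfl⟩, add_zero]

/-- The pseudometric structure on `X` whose distance is `D(x, y) = G(x, y, y) + G(y, x, x)`, through
which facts about pseudometric spaces apply to `D`. -/
abbrev pseudoMetricSpace (hG : IsGMetric G) : PseudoMetricSpace X where
  dist := gD G
  dist_self := hG.gD_self_s9
  dist_comm _ _ := add_comm _ _
  dist_triangle := hG.gD_triangle

end IsGMetric

/-- For a G-Mohseni cyclical operator, any two `ε`-fixed points `x, y` satisfy
`D(x,y) ≤ 2ε(1+α)/(1−2α)`. -/
theorem stmt_9 {X : Type*} [Nonempty X] {m : ℕ} [NeZero m]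
    (G : X → X → X → ℝ) (hG : IsGMetric G)
    (A : Fin m → Set X) (hA : ∀ i, (A i).Nonempty)
    (T : X → X) (hT : IsCyclical A T)
    (α : ℝ) (hα : α ∈ Set.Ioo (0 : ℝ) (1/2))
    (hcontr : ∀ i : Fin m, ∀ x ∈ A i, ∀ y ∈ A (i + 1),
      gD G (T x) (T y) ≤ α * (gD G x y + gD G (T x) (T y))) :
    ∀ ε > 0, ∀ x ∈ {x ∈ ⋃ i, A i | gD G x (T x) < ε},
      ∀ y ∈ {x ∈ ⋃ i, A i | gD G x (T x) < ε},
      gD G x y ≤ 2 * ε * (1 + α) / (1 - 2 * α) := by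
  rintro ε hε x ⟨hx, hxε⟩ y ⟨hy, hyε⟩
  let := hG.pseudoMetricSpace
  have sharp : gD G x y ≤ 2 * ε * (1 - α) / (1 - 2 * α) :=
    stmt_9_general hT hα.2 hcontr hx hxε.le hy hyε.le
  exact sharp.trans (by gcongr <;> linarith [hα.1, hα.2])
end

section
/- Let X be a metric space with metric d, let X_1,…,X_m be nonempty subsets of X, let T : ∪_{i=1}^m X_i → ∪_{i=1}^m X_i be a cyclical operator, and let ε > 0. Assume: (i) F_ε(T) ≠ ∅; (ii) there is a function φ : (0,∞) → (0,∞) such that for every θ > 0 and all x, y ∈ F_ε(T), d(x,y) − d(Tx,Ty) ≤ θ implies d(x,y) ≤ φ(θ). Then the diameter of F_ε(T) satisfies δ(F_ε(T)) = sup{d(x,y) : x, y ∈ F_ε(T)} ≤ φ(2ε). -/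
open Filter Set

section ApproxFixedPoints

variable {X : Type*} [PseudoMetricSpace X] {T : X → X} {S : Set X} {ε : ℝ}

/-- The set `F_ε(T)` of `ε`-fixed points of an operator `T` on `S`. The operator is encoded as a
map on the whole space, of which only the values on `S` matter. -/
def approxFixedPoints (T : X → X) (S : Set X) (ε : ℝ) : Set X :=
  {x ∈ S | dist (T x) x < ε}

lemma dist_sub_dist_map_lt_of_mem_approxFixedPoints {x y : X}
    (hx : x ∈ approxFixedPoints T S ε) (hy : y ∈ approxFixedPoints T S ε) :
    dist x y - dist (T x) (T y) < 2 * ε := by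
  have hxT : dist x (T x) < ε := dist_comm (T x) x ▸ hx.2
  have hyT : dist (T y) y < ε := hy.2
  linarith [dist_triangle4 x (T x) (T y) y]

theorem stmt_16_general (hne : (approxFixedPoints T S ε).Nonempty) {c : ℝ}
    (hc : ∀ x ∈ approxFixedPoints T S ε, ∀ y ∈ approxFixedPoints T S ε,
      dist x y - dist (T x) (T y) ≤ 2 * ε → dist x y ≤ c) :
    sSup {d : ℝ | ∃ x ∈ approxFixedPoints T S ε, ∃ y ∈ approxFixedPoints T S ε,
      d = dist x y} ≤ c := by
  obtain ⟨z, hz⟩ := hne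
  refine csSup_le ⟨dist z z, z, hz, z, hz, rfl⟩ ?_
  rintro _ ⟨x, hx, y, hy, rfl⟩
  exact hc x hx y hy (dist_sub_dist_map_lt_of_mem_approxFixedPoints hx hy).le

end ApproxFixedPoints

/-- Quantitative lemma: if the set `F_ε(T)` of `ε`-fixed points of a cyclical
operator `T` is nonempty and satisfies the `φ`-condition, then its diameter is at
most `φ(2ε)`. -/
theorem stmt_16 {X : Type*} [MetricSpace X] {m : ℕ} [NeZero m]
    (A : Fin m → Set X) (hA : ∀ i, (A i).Nonempty)
    (T : X → X) (hT : IsCyclical A T)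
    (ε : ℝ) (hε : 0 < ε)
    (hne : {x ∈ ⋃ i, A i | dist (T x) x < ε}.Nonempty)
    (φ : ℝ → ℝ) (hφpos : ∀ θ > 0, 0 < φ θ)
    (hφ : ∀ θ > 0, ∀ x ∈ {x ∈ ⋃ i, A i | dist (T x) x < ε},
      ∀ y ∈ {x ∈ ⋃ i, A i | dist (T x) x < ε},
      dist x y - dist (T x) (T y) ≤ θ → dist x y ≤ φ θ) :
    sSup {d : ℝ | ∃ x ∈ {x ∈ ⋃ i, A i | dist (T x) x < ε},
      ∃ y ∈ {x ∈ ⋃ i, A i | dist (T x) x < ε}, d = dist x y} ≤ φ (2 * ε) :=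
  stmt_16_general hne (hφ (2 * ε) (mul_pos two_pos hε))
end
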